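/- There is a constant K independent of s, λ and T such that, for any s ≥ C T¹⁰, the weight combination e^{−2sα} e^{−2sα*} ξ³ satisfies the pointwise derivative bounds |(e^{−2sα} e^{−2sα*} ξ³)_t| ≤ K T s e^{−2sα} e^{−2sα*} ξ^{4 + 1/5} and |Δ(e^{−2sα} e^{−2sα*} ξ³)| ≤ K s² λ² e^{−2sα} e^{−2sα*} ξ⁵ on Q. -/

import Mathlib

open MeasureTheory Real Set

noncomputable section

/-- Euclidean space `ℝ^N`. -/
abbrev Evec (N : ℕ) := EuclideanSpace ℝ (Fin N)

/-- `i`-th partial derivative of a scalar field. -/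
def pd {N : ℕ} (i : Fin N) (u : Evec N → ℝ) (x : Evec N) : ℝ :=
  fderiv ℝ u x (EuclideanSpace.single i 1)

/-- Laplacian of a scalar field. -/
def lap {N : ℕ} (u : Evec N → ℝ) (x : Evec N) : ℝ := ∑ i, pd i (pd i u) x

/-- Divergence of a vector field. -/
def vdiv {N : ℕ} (w : Evec N → Evec N) (x : Evec N) : ℝ := ∑ i, pd i (fun y => w y i) x

/-- Time derivative of the `i`-th component of a time dependent vector field. -/
def dtc {N : ℕ} (w : ℝ → Evec N → Evec N) (t : ℝ) (x : Evec N) (i : Fin N) : ℝ :=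
  deriv (fun τ => w τ x i) t

/-- `((w·∇)z)_i = ∑_j w_j ∂_j z_i`. -/
def conv {N : ℕ} (w z : Evec N → Evec N) (x : Evec N) (i : Fin N) : ℝ :=
  ∑ j, w x j * pd j (fun y => z y i) x

/-- `((z,∇ᵗ)w)_i = ∑_j z_j ∂_i w_j`. -/
def tconv {N : ℕ} (z w : Evec N → Evec N) (x : Evec N) (i : Fin N) : ℝ :=
  ∑ j, z x j * pd i (fun y => w y j) x

/-- The time factor `t⁵(T-t)⁵`. -/
def tw (T t : ℝ) : ℝ := t ^ 5 * (T - t) ^ 5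

/-- The Carleman weight `α(x,t)`. -/
def wA {N : ℕ} (lam Mη T : ℝ) (η : Evec N → ℝ) (t : ℝ) (x : Evec N) : ℝ :=
  (Real.exp (12 * lam * Mη) - Real.exp (lam * (10 * Mη + η x))) / tw T t

/-- The Carleman weight `ξ(x,t)`. -/
def wX {N : ℕ} (lam Mη T : ℝ) (η : Evec N → ℝ) (t : ℝ) (x : Evec N) : ℝ :=
  Real.exp (lam * (10 * Mη + η x)) / tw T t

/-- `α*(t) = max_x α(x,t)` (attained where `η = 0`). -/
def wAs (lam Mη T t : ℝ) : ℝ :=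
  (Real.exp (12 * lam * Mη) - Real.exp (10 * lam * Mη)) / tw T t

/-- `α̂(t) = min_x α(x,t)` (attained where `η = ‖η‖_∞`). -/
def wAh (lam Mη T t : ℝ) : ℝ :=
  (Real.exp (12 * lam * Mη) - Real.exp (11 * lam * Mη)) / tw T t

/-- `ξ*(t) = min_x ξ(x,t)`. -/
def wXs (lam Mη T t : ℝ) : ℝ := Real.exp (10 * lam * Mη) / tw T t

/-- `ξ̂(t) = max_x ξ(x,t)`. -/
def wXh (lam Mη T t : ℝ) : ℝ := Real.exp (11 * lam * Mη) / tw T t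

/-- The combined weight `e^{−2sα} e^{−2sα*} ξ³`. -/
def wComb {N : ℕ} (s lam Mη T : ℝ) (η : Evec N → ℝ) (t : ℝ) (x : Evec N) : ℝ :=
  Real.exp (-2 * s * wA lam Mη T η t x) * Real.exp (-2 * s * wAs lam Mη T t)
    * (wX lam Mη T η t x) ^ 3

/-!
Both bounds come from one profile, `F z = e^{cz} zⁿ`: where `1 ≤ b z`, each derivative of `F` costs
at most a factor `|c| + n b`. All the weights are multiples of `θ = 1 / (t⁵(T-t)⁵)` at a fixed
point of space, and `α + ξ` is constant in `x` at a fixed time. Hence the combined weight is, up to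
a constant factor, `F ∘ θ` as a function of time, with `c = O(s e^{12λM})`, and `F ∘ ξ` as a
function of space, with `c = 2s`. The chain rule then reduces the claim to
`|θ'| ≤ 5 T θ^{6/5}` together with `e^{12λM} θ^{6/5} ≤ ξ^{6/5}`, and to
`|∇ξ| = λ ξ |∇η|`, `Δξ = ξ (λ² |∇η|² + λ Δη)`.
-/

/-! ### Partial derivatives and the Laplacian -/

section Laplacian

variable {N : ℕ} {u v : Evec N → ℝ} {G : ℝ → ℝ} {x : Evec N}

lemma pd_mul (i : Fin N) (hu : DifferentiableAt ℝ u x) (hv : DifferentiableAt ℝ v x) :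
    pd i (fun y => u y * v y) x = u x * pd i v x + v x * pd i u x := by
  simp [pd, fderiv_fun_mul hu hv]

lemma fderiv_scalar_comp {E : Type*} [NormedAddCommGroup E] [NormedSpace ℝ E] {u : E → ℝ} {x : E}
    (hG : DifferentiableAt ℝ G (u x)) (hu : DifferentiableAt ℝ u x) :
    fderiv ℝ (fun y => G (u y)) x = deriv G (u x) • fderiv ℝ u x :=
  (hG.hasDerivAt.comp_hasFDerivAt x hu.hasFDerivAt).fderiv

lemma pd_scalar_comp (i : Fin N) (hG : DifferentiableAt ℝ G (u x)) (hu : DifferentiableAt ℝ u x) :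
    pd i (fun y => G (u y)) x = deriv G (u x) * pd i u x := by
  simp [pd, fderiv_scalar_comp hG hu]

lemma pd_congr (i : Fin N) (h : u =ᶠ[nhds x] v) : pd i u x = pd i v x := by
  simp only [pd, h.fderiv_eq]

lemma contDiffAt_pd {m n : WithTop ℕ∞} (i : Fin N) (hu : ContDiffAt ℝ n u x) (hmn : m + 1 ≤ n) :
    ContDiffAt ℝ m (pd i u) x :=
  (hu.fderiv_right hmn).clm_apply contDiffAt_const

lemma sum_pd_sq (u : Evec N → ℝ) (x : Evec N) : ∑ i, pd i u x ^ 2 = ‖fderiv ℝ u x‖ ^ 2 := by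
  have pd_eq (i : Fin N) : pd i u x = gradient u x i := by
    rw [pd, ← InnerProductSpace.toDual_symm_apply, EuclideanSpace.inner_single_right]
    simp [gradient]
  have norm_eq : ‖fderiv ℝ u x‖ = ‖gradient u x‖ := by simp [gradient]
  simp only [pd_eq, norm_eq, EuclideanSpace.real_norm_sq_eq]

lemma continuous_lap (hu : ContDiff ℝ 2 u) : Continuous (lap u) := by
  have pd_contDiff (i : Fin N) : ContDiff ℝ 1 (pd i u) :=
    contDiff_iff_contDiffAt.2 fun _ => contDiffAt_pd i hu.contDiffAt (by norm_num)
  exact continuous_finsetSum _ fun i _ =>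
    ((pd_contDiff i).continuous_fderiv one_ne_zero).clm_apply continuous_const

lemma lap_const_mul (a : ℝ) (u : Evec N → ℝ) (x : Evec N) :
    lap (fun y => a * u y) x = a * lap u x := by
  have pd_const_mul (i : Fin N) (v : Evec N → ℝ) :
      pd i (fun y => a * v y) = fun y => a * pd i v y := by
    funext y
    exact DFunLike.congr_fun (congrFun (fderiv_const_smul_field a (f := v)) y) _
  simp only [lap, pd_const_mul, Finset.mul_sum]

lemma lap_scalar_comp (hG : ContDiffAt ℝ 2 G (u x)) (hu : ContDiffAt ℝ 2 u x) :
    lap (fun y => G (u y)) x =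
      deriv (deriv G) (u x) * ‖fderiv ℝ u x‖ ^ 2 + deriv G (u x) * lap u x := by
  have hu1 : DifferentiableAt ℝ u x := hu.differentiableAt two_ne_zero
  have hG' : DifferentiableAt ℝ (deriv G) (u x) :=
    ((hG.fderiv_right (m := 1) (by norm_num)).clm_apply contDiffAt_const).differentiableAt
      one_ne_zero
  have pd_near (i : Fin N) :
      pd i (fun y => G (u y)) =ᶠ[nhds x] fun y => deriv G (u y) * pd i u y := by
    filter_upwards [hu.eventually (by simp),
      hu.continuousAt.eventually (hG.eventually (by simp))] with y huy hGy
    exact pd_scalar_comp i (hGy.differentiableAt two_ne_zero) (huy.differentiableAt two_ne_zero)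
  have second (i : Fin N) : pd i (pd i fun y => G (u y)) x =
      deriv (deriv G) (u x) * pd i u x ^ 2 + deriv G (u x) * pd i (pd i u) x := by
    rw [pd_congr i (pd_near i), pd_mul i (u := fun y => deriv G (u y)) (hG'.comp x hu1)
      ((contDiffAt_pd (m := 1) i hu (by norm_num)).differentiableAt one_ne_zero),
      pd_scalar_comp i hG' hu1]
    ring
  simp only [lap, second, Finset.sum_add_distrib, ← Finset.mul_sum, sum_pd_sq]

end Laplacian

/-! ### The profile `e^{cz} zⁿ` -/

/-- The profile `z ↦ e^{cz} zⁿ`, through which the combined weight depends on `1 / (t⁵(T-t)⁵)` in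
time and on `ξ` in space. -/
def expPow (c : ℝ) (n : ℕ) (z : ℝ) : ℝ := Real.exp (c * z) * z ^ n

section ExpPow

variable {b c z : ℝ}

lemma expPow_nonneg (c : ℝ) (n : ℕ) (hz : 0 ≤ z) : 0 ≤ expPow c n z := by
  unfold expPow; positivity

lemma contDiff_expPow (c : ℝ) (n : ℕ) {k : WithTop ℕ∞} : ContDiff ℝ k (expPow c n) := by
  unfold expPow; fun_prop

lemma differentiable_expPow (c : ℝ) (n : ℕ) : Differentiable ℝ (expPow c n) :=
  (contDiff_expPow c n (k := 1)).differentiable one_ne_zero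

lemma deriv_expPow (c : ℝ) (n : ℕ) :
    deriv (expPow c n) = fun z => c * expPow c n z + n * expPow c (n - 1) z := by
  funext z
  have h := ((hasDerivAt_id z).const_mul c).exp.mul (hasDerivAt_pow n z)
  refine (h.congr_deriv ?_).deriv
  simp only [expPow, id]
  ring

lemma deriv_deriv_expPow (c : ℝ) (n : ℕ) (z : ℝ) :
    deriv (deriv (expPow c n)) z =
      c * deriv (expPow c n) z + n * deriv (expPow c (n - 1)) z := by
  have h (m : ℕ) := (differentiable_expPow c m z).hasDerivAt
  rw [congrArg deriv (deriv_expPow c n)]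
  exact (((h n).const_mul c).fun_add ((h (n - 1)).const_mul (n : ℝ))).deriv

lemma natCast_mul_expPow_pred_le (c : ℝ) (n : ℕ) (hz : 0 ≤ z) (hbz : 1 ≤ b * z) :
    n * expPow c (n - 1) z ≤ n * b * expPow c n z := by
  cases n with
  | zero => simp
  | succ m =>
    have h : expPow c (m + 1) z = z * expPow c m z := by unfold expPow; ring
    calc ((m + 1 : ℕ) : ℝ) * expPow c m z ≤ (m + 1 : ℕ) * (b * z * expPow c m z) := by
          gcongr
          exact le_mul_of_one_le_left (expPow_nonneg c m hz) hbz
      _ = (m + 1 : ℕ) * b * expPow c (m + 1) z := by rw [h]; ring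

lemma abs_deriv_expPow_le (c : ℝ) (n : ℕ) (hz : 0 ≤ z) (hbz : 1 ≤ b * z) :
    |deriv (expPow c n) z| ≤ (|c| + n * b) * expPow c n z := by
  have hF (m : ℕ) := expPow_nonneg c m hz
  calc |deriv (expPow c n) z| ≤ |c * expPow c n z| + |n * expPow c (n - 1) z| := by
        rw [deriv_expPow]; exact abs_add_le _ _
    _ = |c| * expPow c n z + n * expPow c (n - 1) z := by
        simp only [abs_mul, abs_of_nonneg (hF _), Nat.abs_cast]
    _ ≤ (|c| + n * b) * expPow c n z := by
        linarith [natCast_mul_expPow_pred_le c n hz hbz]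

lemma abs_deriv_deriv_expPow_le (c : ℝ) (n : ℕ) (hz : 0 ≤ z) (hbz : 1 ≤ b * z) :
    |deriv (deriv (expPow c n)) z| ≤ (|c| + n * b) ^ 2 * expPow c n z := by
  have hb : 0 ≤ b := (pos_of_mul_pos_left (one_pos.trans_le hbz) hz).le
  have hpred : ((n - 1 : ℕ) : ℝ) ≤ n := mod_cast n.sub_le 1
  have hlower : |deriv (expPow c (n - 1)) z| ≤ (|c| + n * b) * expPow c (n - 1) z := by
    refine (abs_deriv_expPow_le c (n - 1) hz hbz).trans ?_
    gcongr
    exact expPow_nonneg c _ hz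
  calc |deriv (deriv (expPow c n)) z|
      ≤ |c| * |deriv (expPow c n) z| + n * |deriv (expPow c (n - 1)) z| := by
        rw [deriv_deriv_expPow]
        exact (abs_add_le _ _).trans_eq (by simp only [abs_mul, Nat.abs_cast])
    _ ≤ |c| * ((|c| + n * b) * expPow c n z) +
          n * ((|c| + n * b) * expPow c (n - 1) z) := by
        gcongr
        exact abs_deriv_expPow_le c n hz hbz
    _ = (|c| + n * b) * (|c| * expPow c n z + n * expPow c (n - 1) z) := by ring
    _ ≤ (|c| + n * b) * (|c| * expPow c n z + n * b * expPow c n z) := by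
        gcongr ?_ * (_ + ?_)
        exact natCast_mul_expPow_pred_le c n hz hbz
    _ = (|c| + n * b) ^ 2 * expPow c n z := by ring

lemma abs_deriv_expPow_comp_le (n : ℕ) {f : ℝ → ℝ} {t : ℝ} (hf : DifferentiableAt ℝ f t)
    (hft : 0 ≤ f t) (hbf : 1 ≤ b * f t) :
    |deriv (fun τ => expPow c n (f τ)) t| ≤
      (|c| + n * b) * expPow c n (f t) * |deriv f t| := by
  have chain := (differentiable_expPow c n (f t)).hasDerivAt.comp t hf.hasDerivAt
  rw [show (fun τ => expPow c n (f τ)) = expPow c n ∘ f from rfl, chain.deriv, abs_mul]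
  gcongr
  exact abs_deriv_expPow_le c n hft hbf

lemma abs_lap_expPow_comp_le {N : ℕ} (n : ℕ) {u : Evec N → ℝ} {x : Evec N}
    (hu : ContDiffAt ℝ 2 u x) (hux : 0 ≤ u x) (hbu : 1 ≤ b * u x) :
    |lap (fun y => expPow c n (u y)) x| ≤
      expPow c n (u x) *
        ((|c| + n * b) ^ 2 * ‖fderiv ℝ u x‖ ^ 2 + (|c| + n * b) * |lap u x|) := by
  rw [lap_scalar_comp (contDiff_expPow c n).contDiffAt hu]
  calc _ ≤ |deriv (deriv (expPow c n)) (u x)| * ‖fderiv ℝ u x‖ ^ 2 +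
          |deriv (expPow c n) (u x)| * |lap u x| :=
        (abs_add_le _ _).trans_eq (by simp only [abs_mul, abs_pow, abs_norm])
    _ ≤ (|c| + n * b) ^ 2 * expPow c n (u x) * ‖fderiv ℝ u x‖ ^ 2 +
          (|c| + n * b) * expPow c n (u x) * |lap u x| := by
        gcongr
        · exact abs_deriv_deriv_expPow_le c n hux hbu
        · exact abs_deriv_expPow_le c n hux hbu
    _ = _ := by ring

end ExpPow

/-! ### The time factor -/

section TimeFactor

variable {T t : ℝ}

lemma tw_eq_pow (T t : ℝ) : tw T t = (t * (T - t)) ^ 5 := (mul_pow _ _ _).symm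

lemma tw_pos (ht : t ∈ Ioo 0 T) : 0 < tw T t :=
  mul_pos (pow_pos ht.1 5) (pow_pos (sub_pos.2 ht.2) 5)

lemma tw_le_pow (ht : t ∈ Ioo 0 T) : tw T t ≤ T ^ 10 := by
  have hT : 0 ≤ T - t := (sub_pos.2 ht.2).le
  have hq : t * (T - t) ≤ T * T :=
    mul_le_mul ht.2.le (sub_le_self T ht.1.le) hT (ht.1.trans ht.2).le
  calc tw T t = (t * (T - t)) ^ 5 := tw_eq_pow T t
    _ ≤ (T * T) ^ 5 := pow_le_pow_left₀ (mul_nonneg ht.1.le hT) hq 5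
    _ = T ^ 10 := by ring

lemma hasDerivAt_tw (T t : ℝ) :
    HasDerivAt (tw T) (5 * (t * (T - t)) ^ 4 * (T - 2 * t)) t := by
  have h := ((hasDerivAt_id t).mul ((hasDerivAt_id t).const_sub T)).pow 5
  refine (h.congr_deriv ?_).congr_of_eventuallyEq (.of_forall (tw_eq_pow T))
  simp only [Pi.mul_apply, id]
  push_cast
  ring

lemma differentiableAt_inv_tw (ht : t ∈ Ioo 0 T) :
    DifferentiableAt ℝ (fun τ => (tw T τ)⁻¹) t :=
  (hasDerivAt_tw T t).differentiableAt.inv (tw_pos ht).ne'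

lemma inv_tw_rpow_six_fifths (ht : t ∈ Ioo 0 T) :
    (tw T t)⁻¹ ^ ((6 : ℝ) / 5) = ((t * (T - t)) ^ 6)⁻¹ := by
  have hq : 0 ≤ t * (T - t) := mul_nonneg ht.1.le (sub_pos.2 ht.2).le
  rw [Real.inv_rpow (tw_pos ht).le, tw_eq_pow, ← Real.rpow_natCast_mul hq, ← Real.rpow_natCast]
  norm_num

lemma abs_deriv_inv_tw_le (ht : t ∈ Ioo 0 T) :
    |deriv (fun τ => (tw T τ)⁻¹) t| ≤ 5 * T * (tw T t)⁻¹ ^ ((6 : ℝ) / 5) := by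
  have hq : 0 < t * (T - t) := mul_pos ht.1 (sub_pos.2 ht.2)
  have hslope : |T - 2 * t| ≤ T := abs_le.2 ⟨by linarith [ht.2], by linarith [ht.1]⟩
  have hderiv : deriv (fun τ => (tw T τ)⁻¹) t =
      -(5 * (T - 2 * t) * ((t * (T - t)) ^ 6)⁻¹) := by
    rw [((hasDerivAt_tw T t).fun_inv (tw_pos ht).ne').deriv, tw_eq_pow]
    field_simp
  rw [hderiv, inv_tw_rpow_six_fifths ht, abs_neg, abs_mul, abs_mul, Nat.abs_ofNat,
    abs_of_pos (by positivity : 0 < ((t * (T - t)) ^ 6)⁻¹)]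
  gcongr

lemma abs_deriv_expPow_inv_tw_le {b c : ℝ} (n : ℕ) (ht : t ∈ Ioo 0 T)
    (hb : 1 ≤ b * (tw T t)⁻¹) :
    |deriv (fun τ => expPow c n (tw T τ)⁻¹) t| ≤
      5 * T * (|c| + n * b) * (expPow c n (tw T t)⁻¹ * (tw T t)⁻¹ ^ ((6 : ℝ) / 5)) := by
  have hθ : 0 < (tw T t)⁻¹ := inv_pos.2 (tw_pos ht)
  have hb0 : 0 ≤ b := (pos_of_mul_pos_left (one_pos.trans_le hb) hθ.le).le
  have hF := expPow_nonneg c n hθ.le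
  calc _ ≤ (|c| + n * b) * expPow c n (tw T t)⁻¹ * |deriv (fun τ => (tw T τ)⁻¹) t| :=
        abs_deriv_expPow_comp_le n (differentiableAt_inv_tw ht) hθ.le hb
    _ ≤ (|c| + n * b) * expPow c n (tw T t)⁻¹ *
          (5 * T * (tw T t)⁻¹ ^ ((6 : ℝ) / 5)) := by
        gcongr
        exact abs_deriv_inv_tw_le ht
    _ = _ := by ring

end TimeFactor

/-! ### The weights -/

section Weights

variable {N : ℕ} {s lam M T t : ℝ} {η : Evec N → ℝ} {x : Evec N}

lemma wX_pos (ht : t ∈ Ioo 0 T) : 0 < wX lam M T η t x :=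
  div_pos (Real.exp_pos _) (tw_pos ht)

lemma one_le_mul_wX (hs : T ^ 10 ≤ s) (ht : t ∈ Ioo 0 T) (hlam : 0 ≤ lam)
    (hη : η x ∈ Icc 0 M) : 1 ≤ s * wX lam M T η t x := by
  have hexp : 1 ≤ Real.exp (lam * (10 * M + η x)) :=
    Real.one_le_exp (mul_nonneg hlam (by linarith [hη.1, hη.2]))
  rw [wX, ← mul_div_assoc, one_le_div₀ (tw_pos ht)]
  exact (tw_le_pow ht).trans (hs.trans
    (le_mul_of_one_le_right ((tw_pos ht).le.trans ((tw_le_pow ht).trans hs)) hexp))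

lemma contDiffAt_wX {k : WithTop ℕ∞} (hη : ContDiffAt ℝ k η x) :
    ContDiffAt ℝ k (wX lam M T η t) x := by
  unfold wX; fun_prop

lemma deriv_exp_affine_div (lam m w : ℝ) :
    deriv (fun r => Real.exp (lam * (m + r)) / w) =
      fun r => lam * (Real.exp (lam * (m + r)) / w) := by
  funext r
  refine ((((hasDerivAt_id r).const_add m).const_mul lam).exp.div_const w).deriv.trans ?_
  simp only [id]
  ring

lemma norm_fderiv_wX_sq (hη : DifferentiableAt ℝ η x) :
    ‖fderiv ℝ (wX lam M T η t) x‖ ^ 2 =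
      (lam * wX lam M T η t x) ^ 2 * ‖fderiv ℝ η x‖ ^ 2 := by
  have h := fderiv_scalar_comp (u := η) (x := x)
    (G := fun r => Real.exp (lam * (10 * M + r)) / tw T t) (by fun_prop) hη
  rw [deriv_exp_affine_div] at h
  rw [show wX lam M T η t = fun y => Real.exp (lam * (10 * M + η y)) / tw T t from rfl, h,
    norm_smul, mul_pow, Real.norm_eq_abs, sq_abs]

lemma lap_wX (hη : ContDiffAt ℝ 2 η x) :
    lap (wX lam M T η t) x =
      wX lam M T η t x * (lam ^ 2 * ‖fderiv ℝ η x‖ ^ 2 + lam * lap η x) := by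
  have h := lap_scalar_comp (u := η) (x := x)
    (G := fun r => Real.exp (lam * (10 * M + r)) / tw T t) (by fun_prop) hη
  simp only [deriv_exp_affine_div, deriv_const_mul_field'] at h
  refine h.trans ?_
  unfold wX
  ring

lemma wComb_eq_expPow_inv_tw (s lam M T t : ℝ) (η : Evec N → ℝ) (x : Evec N) :
    wComb s lam M T η t x = Real.exp (lam * (10 * M + η x)) ^ 3 *
      expPow (-2 * s * ((Real.exp (12 * lam * M) - Real.exp (lam * (10 * M + η x))) +
        (Real.exp (12 * lam * M) - Real.exp (10 * lam * M)))) 3 (tw T t)⁻¹ := by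
  unfold wComb wA wAs wX expPow
  rw [← Real.exp_add, div_pow]
  ring_nf

lemma wComb_eq_expPow_wX (s lam M T t : ℝ) (η : Evec N → ℝ) (x : Evec N) :
    wComb s lam M T η t x =
      Real.exp (-2 * s * (Real.exp (12 * lam * M) / tw T t + wAs lam M T t)) *
        expPow (2 * s) 3 (wX lam M T η t x) := by
  unfold wComb wA wX expPow
  rw [← Real.exp_add, ← mul_assoc, ← Real.exp_add]
  ring_nf

end Weights

/-! ### Derivative bounds for the combined weight -/

section Bounds

variable {N : ℕ} {s lam M T t : ℝ} {η : Evec N → ℝ} {x : Evec N}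

lemma wComb_pos (ht : t ∈ Ioo 0 T) : 0 < wComb s lam M T η t x :=
  mul_pos (mul_pos (Real.exp_pos _) (Real.exp_pos _)) (pow_pos (wX_pos ht) 3)

lemma exp_mul_inv_tw_rpow_le_wX_rpow (ht : t ∈ Ioo 0 T) (hlam : 0 ≤ lam) (hη : 0 ≤ η x) :
    Real.exp (12 * lam * M) * (tw T t)⁻¹ ^ ((6 : ℝ) / 5) ≤
      wX lam M T η t x ^ ((6 : ℝ) / 5) := by
  have hθ : 0 ≤ (tw T t)⁻¹ := (inv_pos.2 (tw_pos ht)).le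
  have hmin : 10 * lam * M ≤ lam * (10 * M + η x) := by linarith [mul_nonneg hlam hη]
  calc Real.exp (12 * lam * M) * (tw T t)⁻¹ ^ ((6 : ℝ) / 5)
      = (Real.exp (10 * lam * M) * (tw T t)⁻¹) ^ ((6 : ℝ) / 5) := by
        rw [Real.mul_rpow (Real.exp_pos _).le hθ, ← Real.exp_mul]
        ring_nf
    _ ≤ (Real.exp (lam * (10 * M + η x)) * (tw T t)⁻¹) ^ ((6 : ℝ) / 5) :=
        Real.rpow_le_rpow (by positivity)
          (mul_le_mul_of_nonneg_right (Real.exp_le_exp.2 hmin) hθ) (by norm_num)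

lemma abs_deriv_wComb_le (hs : T ^ 10 ≤ s) (ht : t ∈ Ioo 0 T) (hlam : 0 ≤ lam)
    (hη : η x ∈ Icc 0 M) :
    |deriv (fun τ => wComb s lam M T η τ x) t| ≤
      35 * T * s * (wComb s lam M T η t x * wX lam M T η t x ^ ((6 : ℝ) / 5)) := by
  have hT : 0 < T := ht.1.trans ht.2
  have hs0 : 0 < s := (pow_pos hT 10).trans_le hs
  have hM : 0 ≤ M := hη.1.trans hη.2
  set E := Real.exp (12 * lam * M)
  set R := Real.exp (lam * (10 * M + η x))
  set θ := (tw T t)⁻¹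
  set c := -2 * s * ((E - R) + (E - Real.exp (10 * lam * M))) with hc
  have hwComb (τ : ℝ) : wComb s lam M T η τ x = R ^ 3 * expPow c 3 (tw T τ)⁻¹ :=
    wComb_eq_expPow_inv_tw s lam M T τ η x
  have hθ : 0 < θ := inv_pos.2 (tw_pos ht)
  have hR : 0 < R := Real.exp_pos _
  have hRE : R ≤ E := Real.exp_le_exp.2 (by nlinarith [hη.2])
  have hQE : Real.exp (10 * lam * M) ≤ E := Real.exp_le_exp.2 (by nlinarith)
  have hc_le : |c| ≤ 4 * (s * E) := by
    rw [hc, abs_le]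
    constructor <;> nlinarith [Real.exp_pos (10 * lam * M)]
  have hone : 1 ≤ s * E * θ :=
    calc 1 ≤ s * wX lam M T η t x := one_le_mul_wX hs ht hlam hη
      _ = s * R * θ := by rw [wX, div_eq_mul_inv, ← mul_assoc]
      _ ≤ s * E * θ := by gcongr
  have hF : 0 ≤ expPow c 3 θ := expPow_nonneg c 3 hθ.le
  simp only [hwComb, deriv_const_mul_field', abs_mul, abs_of_pos (pow_pos hR 3)]
  calc R ^ 3 * |deriv (fun τ => expPow c 3 (tw T τ)⁻¹) t|
      ≤ R ^ 3 * (5 * T * (4 * (s * E) + (3 : ℕ) * (s * E)) *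
          (expPow c 3 θ * θ ^ ((6 : ℝ) / 5))) := by
        gcongr
        refine (abs_deriv_expPow_inv_tw_le 3 ht hone).trans ?_
        gcongr
    _ = 35 * T * s * (R ^ 3 * expPow c 3 θ * (E * θ ^ ((6 : ℝ) / 5))) := by
        push_cast; ring
    _ ≤ 35 * T * s * (R ^ 3 * expPow c 3 θ * wX lam M T η t x ^ ((6 : ℝ) / 5)) := by
        gcongr
        exact exp_mul_inv_tw_rpow_le_wX_rpow ht hlam hη.1

lemma abs_lap_wX_le (ht : t ∈ Ioo 0 T) (hlam : 1 ≤ lam) (hη : ContDiffAt ℝ 2 η x) :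
    |lap (wX lam M T η t) x| ≤
      lam ^ 2 * wX lam M T η t x * (‖fderiv ℝ η x‖ ^ 2 + |lap η x|) := by
  have hξ : 0 < wX lam M T η t x := wX_pos ht
  rw [lap_wX hη, abs_mul, abs_of_pos hξ]
  calc wX lam M T η t x * |lam ^ 2 * ‖fderiv ℝ η x‖ ^ 2 + lam * lap η x|
      ≤ wX lam M T η t x * (lam ^ 2 * ‖fderiv ℝ η x‖ ^ 2 + lam * |lap η x|) := by
        gcongr
        refine (abs_add_le _ _).trans_eq ?_
        rw [abs_mul lam, abs_of_pos (one_pos.trans_le hlam), abs_of_nonneg (by positivity)]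
    _ ≤ wX lam M T η t x * (lam ^ 2 * ‖fderiv ℝ η x‖ ^ 2 + lam ^ 2 * |lap η x|) := by
        gcongr
        exact le_self_pow₀ hlam two_ne_zero
    _ = _ := by ring

lemma abs_lap_wComb_le (hs : T ^ 10 ≤ s) (ht : t ∈ Ioo 0 T) (hlam : 1 ≤ lam)
    (hηC : ContDiffAt ℝ 2 η x) (hη : η x ∈ Icc 0 M) :
    |lap (fun y => wComb s lam M T η t y) x| ≤
      25 * (2 * ‖fderiv ℝ η x‖ ^ 2 + |lap η x|) * s ^ 2 * lam ^ 2 *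
        (wComb s lam M T η t x * wX lam M T η t x ^ 2) := by
  have hs0 : 0 < s := (pow_pos (ht.1.trans ht.2) 10).trans_le hs
  have hone : 1 ≤ s * wX lam M T η t x := one_le_mul_wX hs ht (zero_le_one.trans hlam) hη
  have hξC : ContDiffAt ℝ 2 (wX lam M T η t) x := contDiffAt_wX hηC
  have hΔξ := abs_lap_wX_le (M := M) ht hlam hηC
  set ξ := wX lam M T η t
  set A := Real.exp (-2 * s * (Real.exp (12 * lam * M) / tw T t + wAs lam M T t))
  have hwComb (y : Evec N) : wComb s lam M T η t y = A * expPow (2 * s) 3 (ξ y) :=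
    wComb_eq_expPow_wX s lam M T t η y
  have hξ : 0 < ξ x := wX_pos ht
  have hA : 0 < A := Real.exp_pos _
  have hF : 0 ≤ expPow (2 * s) 3 (ξ x) := expPow_nonneg _ 3 hξ.le
  have hprofile := abs_lap_expPow_comp_le (c := 2 * s) 3 hξC hξ.le hone
  rw [norm_fderiv_wX_sq (hηC.differentiableAt two_ne_zero),
    show |2 * s| + (3 : ℕ) * s = 5 * s by rw [abs_of_pos (by positivity)]; push_cast; ring]
    at hprofile
  simp only [hwComb, lap_const_mul, abs_mul, abs_of_pos hA]
  calc A * |lap (fun y => expPow (2 * s) 3 (ξ y)) x|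
      ≤ A * (expPow (2 * s) 3 (ξ x) * ((5 * s) ^ 2 * ((lam * ξ x) ^ 2 * ‖fderiv ℝ η x‖ ^ 2) +
          5 * s * (lam ^ 2 * ξ x * (‖fderiv ℝ η x‖ ^ 2 + |lap η x|)))) := by
        gcongr
        refine hprofile.trans ?_
        gcongr
    _ = A * expPow (2 * s) 3 (ξ x) * lam ^ 2 * ((5 * (s * ξ x)) ^ 2 * ‖fderiv ℝ η x‖ ^ 2 +
          5 * (s * ξ x) * (‖fderiv ℝ η x‖ ^ 2 + |lap η x|)) := by ring
    _ ≤ A * expPow (2 * s) 3 (ξ x) * lam ^ 2 * ((5 * (s * ξ x)) ^ 2 * ‖fderiv ℝ η x‖ ^ 2 +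
          (5 * (s * ξ x)) ^ 2 * (‖fderiv ℝ η x‖ ^ 2 + |lap η x|)) := by
        gcongr
        exact le_self_pow₀ (by linarith) two_ne_zero
    _ = _ := by ring

end Bounds

theorem statement17_general {N : ℕ} {Ω : Set (Evec N)} (hΩb : Bornology.IsBounded Ω)
    {η : Evec N → ℝ} (hηC : ContDiff ℝ 2 η) {M : ℝ} (hη : ∀ x ∈ Ω, η x ∈ Icc 0 M) :
    ∃ K : ℝ, 0 < K ∧
      ∀ T : ℝ, ∀ lam : ℝ, 1 ≤ lam → ∀ s : ℝ, T ^ 10 ≤ s →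
        ∀ t ∈ Set.Ioo (0:ℝ) T, ∀ x ∈ Ω,
          |deriv (fun τ => wComb s lam M T η τ x) t|
              ≤ K * T * s * Real.exp (-2 * s * wA lam M T η t x)
                * Real.exp (-2 * s * wAs lam M T t)
                * (wX lam M T η t x) ^ ((4:ℝ) + 1/5) ∧
          |lap (fun y => wComb s lam M T η t y) x|
              ≤ K * s ^ 2 * lam ^ 2 * Real.exp (-2 * s * wA lam M T η t x)
                * Real.exp (-2 * s * wAs lam M T t) * (wX lam M T η t x) ^ 5 := by
  have hcont : Continuous fun x => 25 * (2 * ‖fderiv ℝ η x‖ ^ 2 + |lap η x|) := by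
    have := hηC.continuous_fderiv two_ne_zero
    have := continuous_lap hηC
    fun_prop
  obtain ⟨B, hB⟩ := hΩb.isCompact_closure.bddAbove_image hcont.continuousOn
  refine ⟨max 35 B, by positivity, fun T lam hlam s hs t ht x hx => ?_⟩
  have hT : 0 < T := ht.1.trans ht.2
  have hs0 : 0 < s := (pow_pos hT 10).trans_le hs
  have hξ : 0 < wX lam M T η t x := wX_pos ht
  have hW : 0 < wComb s lam M T η t x := wComb_pos ht
  constructor
  · calc _ ≤ 35 * T * s * (wComb s lam M T η t x * wX lam M T η t x ^ ((6 : ℝ) / 5)) :=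
          abs_deriv_wComb_le hs ht (zero_le_one.trans hlam) (hη x hx)
      _ ≤ max 35 B * T * s * (wComb s lam M T η t x * wX lam M T η t x ^ ((6 : ℝ) / 5)) := by
          gcongr
          exact le_max_left 35 B
      _ = _ := by
          rw [show (4 : ℝ) + 1 / 5 = (3 : ℕ) + 6 / 5 by norm_num, Real.rpow_add hξ,
            Real.rpow_natCast]
          unfold wComb
          ring
  · calc _ ≤ 25 * (2 * ‖fderiv ℝ η x‖ ^ 2 + |lap η x|) * s ^ 2 * lam ^ 2 *
            (wComb s lam M T η t x * wX lam M T η t x ^ 2) :=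
          abs_lap_wComb_le hs ht hlam hηC.contDiffAt (hη x hx)
      _ ≤ max 35 B * s ^ 2 * lam ^ 2 * (wComb s lam M T η t x * wX lam M T η t x ^ 2) := by
          gcongr
          exact (hB ⟨x, subset_closure hx, rfl⟩).trans (le_max_right 35 B)
      _ = _ := by
          unfold wComb
          ring

/-- pointwise bounds for the derivatives of the weight
`e^{−2sα}e^{−2sα*}ξ³`: `|(e^{−2sα}e^{−2sα*}ξ³)_t| ≤ K T s e^{−2sα}e^{−2sα*}ξ^{4+1/5}` and
`|Δ(e^{−2sα}e^{−2sα*}ξ³)| ≤ K s² λ² e^{−2sα}e^{−2sα*}ξ⁵` for `s ≥ C T¹⁰`, with `K`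
independent of `s`, `λ` and `T`. -/
theorem statement17
    (N : ℕ)
    (Ω : Set (Evec N)) (hΩo : IsOpen Ω) (hΩconn : IsConnected Ω)
    (hΩb : Bornology.IsBounded Ω)
    (ω₀ : Set (Evec N)) (hω₀o : IsOpen ω₀) (hω₀ne : ω₀.Nonempty) (hω₀sub : ω₀ ⊆ Ω)
    (η : Evec N → ℝ) (hηC : ContDiff ℝ 2 η)
    (Kη : ℝ) (hKη : 0 < Kη)
    (hηgrad : ∀ x ∈ Ω \ closure ω₀, Kη ≤ ‖fderiv ℝ η x‖)
    (hηpos : ∀ x ∈ Ω, 0 < η x) (hηbd : ∀ x ∈ frontier Ω, η x = 0)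
    (Mη : ℝ) (hMη : IsGreatest (η '' closure Ω) Mη) :
    ∃ K : ℝ, 0 < K ∧ ∃ C : ℝ, 0 < C ∧
      ∀ T : ℝ, 0 < T → ∀ lam : ℝ, 1 ≤ lam → ∀ s : ℝ, C * T ^ 10 ≤ s →
        ∀ t ∈ Set.Ioo (0:ℝ) T, ∀ x ∈ Ω,
          |deriv (fun τ => wComb s lam Mη T η τ x) t|
              ≤ K * T * s * Real.exp (-2 * s * wA lam Mη T η t x)
                * Real.exp (-2 * s * wAs lam Mη T t)
                * (wX lam Mη T η t x) ^ ((4:ℝ) + 1/5) ∧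
          |lap (fun y => wComb s lam Mη T η t y) x|
              ≤ K * s ^ 2 * lam ^ 2 * Real.exp (-2 * s * wA lam Mη T η t x)
                * Real.exp (-2 * s * wAs lam Mη T t) * (wX lam Mη T η t x) ^ 5 := by
  obtain ⟨K, hK, h⟩ := statement17_general hΩb hηC fun x hx =>
    ⟨(hηpos x hx).le, hMη.2 ⟨x, subset_closure hx, rfl⟩⟩
  exact ⟨K, hK, 1, one_pos, fun T _ => by simpa only [one_mul] using h T⟩
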